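/- Let m ≥ 1, let p_-, q_-, p_+, q_+ ∈ ℝ with -1 < p_± ≤ q_± < 1, set a_± = p_± q_±, b_± = p_± + q_±, let p_l(ξ) := U_l(cos ξ) - b_- U_{l-1}(cos ξ) + a_- U_{l-2}(cos ξ), and for 0 ≤ l̂ ≤ m let ξ_l̂^{(m)} be the unique real solution of 2mξ + v_{p_-}(ξ) + v_{q_-}(ξ) + v_{p_+}(ξ) + v_{q_+}(ξ) = 2π(l̂+1). Then the m+1 functions ψ_l̂^{(m)} : {0,…,m} → ℝ defined by ψ_l̂^{(m)}(l) := p_l(ξ_l̂^{(m)}) constitute a basis of the (m+1)-dimensional space of complex-valued functions on {0,…,m}. -/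

import Mathlib

/-!
In the variable `x = cos ξ` the function `p_l` is a polynomial of degree `l` whose coefficient of
`x ^ l` is nonzero: it is `2 ^ l` for `l ≥ 1`, and `1 - a₋` for `l = 0`, where `a₋ = p₋ q₋ < 1`
(`bsPoly_coeff_self_ne_zero`). Hence the matrix `(p_l(ξ_k))` is a Vandermonde matrix in the nodes
`cos ξ_k` times an invertible upper triangular matrix, and the functions form a basis as soon as
the nodes are distinct (`det_eval_ne_zero`).

For the nodes to be distinct it suffices that the `ξ_k` are distinct points of `[0, π]`. The closed
form `v_q(ξ) = ξ + 2 arctan (q sin ξ / (1 - q cos ξ))` (`v_eq`) gives `v_q(π) = π`, and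
`v_q` is increasing because its integrand is positive. So the left-hand side of the equation for
`ξ_k` is a strictly increasing function of `ξ`, with value `0` at `0` and `2π(m + 2)` at `π`, and
its values `2π(k + 1)`, `0 ≤ k ≤ m`, are attained at distinct points of `(0, π)`.
-/

/-- The function `v_q(ξ) = ∫_0^ξ (1-q²)/(1-2q cos x + q²) dx`. -/
noncomputable def v (q ξ : ℝ) : ℝ :=
  ∫ x in (0:ℝ)..ξ, (1 - q^2) / (1 - 2*q*Real.cos x + q^2)

/-- The Bernstein–Szegő polynomial `p_l(ξ) = U_l(cos ξ) - b₋ U_{l-1}(cos ξ) + a₋ U_{l-2}(cos ξ)`,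
with the Chebyshev polynomials of the second kind indexed by `ℤ`. -/
noncomputable def bs (am bm : ℝ) (l : ℤ) (ξ : ℝ) : ℝ :=
  (Polynomial.Chebyshev.U ℝ l).eval (Real.cos ξ)
    - bm * (Polynomial.Chebyshev.U ℝ (l - 1)).eval (Real.cos ξ)
    + am * (Polynomial.Chebyshev.U ℝ (l - 2)).eval (Real.cos ξ)

open Polynomial in
/-- The polynomial in `x = cos ξ` underlying the Bernstein–Szegő function `bs`. -/
noncomputable def bsPoly (am bm : ℝ) (l : ℤ) : ℝ[X] :=
  Chebyshev.U ℝ l - C bm * Chebyshev.U ℝ (l - 1) + C am * Chebyshev.U ℝ (l - 2)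

lemma bs_eq_eval (am bm : ℝ) (l : ℤ) (ξ : ℝ) :
    bs am bm l ξ = (bsPoly am bm l).eval (Real.cos ξ) := by
  simp [bs, bsPoly]

open Polynomial in
lemma bsPoly_zero (am bm : ℝ) : bsPoly am bm 0 = C (1 - am) := by
  simp [bsPoly, sub_eq_add_neg]

open Polynomial in
lemma coeff_U_eq_zero (l : ℤ) (n : ℕ) (h : (l + 1).natAbs - 1 < n) :
    (Chebyshev.U ℝ l).coeff n = 0 :=
  coeff_eq_zero_of_natDegree_lt (by rwa [Chebyshev.natDegree_U])

open Polynomial in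
lemma bsPoly_natDegree_le (am bm : ℝ) (l : ℕ) : (bsPoly am bm l).natDegree ≤ l := by
  rw [natDegree_le_iff_coeff_eq_zero]
  intro n hn
  rw [bsPoly, coeff_add, coeff_sub, coeff_C_mul, coeff_C_mul, coeff_U_eq_zero _ _ (by omega),
    coeff_U_eq_zero _ _ (by omega), coeff_U_eq_zero _ _ (by omega)]
  simp

open Polynomial in
lemma bsPoly_coeff_self_ne_zero {am : ℝ} (bm : ℝ) (ha : am ≠ 1) (l : ℕ) :
    (bsPoly am bm l).coeff l ≠ 0 := by
  rcases l with _ | k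
  · -- Here `U_{-2} = -1` contributes to the constant term.
    have : (1 : ℝ) - am ≠ 0 := sub_ne_zero.mpr ha.symm
    simpa [bsPoly_zero] using this
  · rw [bsPoly, coeff_add, coeff_sub, coeff_C_mul, coeff_C_mul,
      coeff_U_eq_zero (_ - 1) _ (by omega), coeff_U_eq_zero (_ - 2) _ (by omega)]
    have h := Chebyshev.leadingCoeff_U_natCast ℝ (k + 1)
    rw [leadingCoeff, Chebyshev.natDegree_U_natCast] at h
    rw [h]
    simp

open Polynomial in
/-- Generalized Vandermonde: evaluating polynomials of degrees `0, …, n - 1` at `n` distinct nodes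
gives a nonsingular matrix. -/
lemma det_eval_ne_zero {n : ℕ} (x : Fin n → ℝ) (hx : Function.Injective x) (p : Fin n → ℝ[X])
    (hdeg : ∀ i, (p i).natDegree ≤ i) (hc : ∀ i, (p i).coeff i ≠ 0) :
    (Matrix.of fun i j => (p j).eval (x i)).det ≠ 0 := by
  rw [Matrix.eval_matrixOfPolynomials_eq_vandermonde_mul_matrixOfPolynomials x p hdeg,
    Matrix.det_mul,
    Matrix.det_of_isUpperTriangular (Matrix.matrixOfPolynomials_blockTriangular p hdeg)]
  exact mul_ne_zero (Matrix.det_vandermonde_ne_zero_iff.mpr hx)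
    (Finset.prod_ne_zero_iff.mpr fun i _ => hc i)

lemma one_sub_mul_cos_pos {q : ℝ} (h1 : -1 < q) (h2 : q < 1) (x : ℝ) :
    0 < 1 - q * Real.cos x := by
  have h : |q * Real.cos x| < 1 := by
    rw [abs_mul]
    exact (mul_le_of_le_one_right (abs_nonneg q) (Real.abs_cos_le_one x)).trans_lt
      (abs_lt.mpr ⟨h1, h2⟩)
  linarith [le_abs_self (q * Real.cos x)]

lemma poisson_denom_pos {q : ℝ} (h1 : -1 < q) (h2 : q < 1) (x : ℝ) :
    0 < 1 - 2 * q * Real.cos x + q ^ 2 := by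
  nlinarith [Real.sin_sq_add_cos_sq x, one_sub_mul_cos_pos h1 h2 x, sq_nonneg (q * Real.sin x),
    pow_pos (one_sub_mul_cos_pos h1 h2 x) 2]

lemma hasDerivAt_closedForm {q : ℝ} (h1 : -1 < q) (h2 : q < 1) (x : ℝ) :
    HasDerivAt (fun x => x + 2 * Real.arctan (q * Real.sin x / (1 - q * Real.cos x)))
      ((1 - q ^ 2) / (1 - 2 * q * Real.cos x + q ^ 2)) x := by
  have hp := (one_sub_mul_cos_pos h1 h2 x).ne'
  have hd := (poisson_denom_pos h1 h2 x).ne'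
  have hsq : Real.sin x ^ 2 = 1 - Real.cos x ^ 2 := Real.sin_sq x
  have hden : HasDerivAt (fun x => 1 - q * Real.cos x) (q * Real.sin x) x := by
    simpa using ((Real.hasDerivAt_cos x).const_mul q).const_sub 1
  refine ((hasDerivAt_id' x).add
    (((((Real.hasDerivAt_sin x).const_mul q).div hden hp).arctan).const_mul 2)).congr_deriv ?_
  have hone : 1 + (q * Real.sin x / (1 - q * Real.cos x)) ^ 2
      = (1 - 2 * q * Real.cos x + q ^ 2) / (1 - q * Real.cos x) ^ 2 := by
    field_simp
    linear_combination q ^ 2 * hsq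
  rw [Pi.div_apply, hone]
  field_simp
  linear_combination (-2) * q ^ 2 * hsq

lemma continuous_poisson {q : ℝ} (h1 : -1 < q) (h2 : q < 1) :
    Continuous fun x => (1 - q ^ 2) / (1 - 2 * q * Real.cos x + q ^ 2) :=
  Continuous.div (by fun_prop) (by fun_prop) fun x => (poisson_denom_pos h1 h2 x).ne'

lemma v_eq {q : ℝ} (h1 : -1 < q) (h2 : q < 1) (ξ : ℝ) :
    v q ξ = ξ + 2 * Real.arctan (q * Real.sin ξ / (1 - q * Real.cos ξ)) := by
  rw [v, intervalIntegral.integral_eq_sub_of_hasDerivAt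
    (fun x _ => hasDerivAt_closedForm h1 h2 x)
    ((continuous_poisson h1 h2).intervalIntegrable _ _)]
  simp

lemma v_zero (q : ℝ) : v q 0 = 0 := by simp [v]

lemma v_pi {q : ℝ} (h1 : -1 < q) (h2 : q < 1) : v q Real.pi = Real.pi := by
  simp [v_eq h1 h2]

lemma v_strictMono {q : ℝ} (h1 : -1 < q) (h2 : q < 1) : StrictMono (v q) := by
  rw [funext (v_eq h1 h2)]
  refine strictMono_of_deriv_pos fun x => ?_
  rw [(hasDerivAt_closedForm h1 h2 x).deriv]
  exact div_pos (by nlinarith) (poisson_denom_pos h1 h2 x)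


theorem stmt10 (m : ℕ) (hm : 1 ≤ m) (pm qm pp qp : ℝ)
    (h1 : -1 < pm) (h2 : pm ≤ qm) (h3 : qm < 1)
    (h4 : -1 < pp) (h5 : pp ≤ qp) (h6 : qp < 1)
    (am bm ap bp : ℝ) (ham : am = pm * qm) (hbm : bm = pm + qm)
    (hap : ap = pp * qp) (hbp : bp = pp + qp)
    (ξhat : Fin (m+1) → ℝ)
    (hξ : ∀ lh : Fin (m+1),
      2*(m:ℝ)*(ξhat lh) + v pm (ξhat lh) + v qm (ξhat lh) + v pp (ξhat lh) + v qp (ξhat lh)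
        = 2*Real.pi*(((lh : ℕ) : ℝ) + 1)) :
    LinearIndependent ℂ
      (fun lh : Fin (m+1) => fun l : Fin (m+1) => (bs am bm ((l : ℕ) : ℤ) (ξhat lh) : ℂ)) ∧
    Submodule.span ℂ
      (Set.range (fun lh : Fin (m+1) => fun l : Fin (m+1) => (bs am bm ((l : ℕ) : ℤ) (ξhat lh) : ℂ)))
      = ⊤ := by
  have hq : -1 < qm := h1.trans_le h2
  have hp : pm < 1 := h2.trans_lt h3
  have hq' : -1 < qp := h4.trans_le h5
  have hp' : pp < 1 := h5.trans_lt h6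
  have ha : am ≠ 1 := by rw [ham]; nlinarith
  let f : ℝ → ℝ := fun ξ => 2 * (m : ℝ) * ξ + v pm ξ + v qm ξ + v pp ξ + v qp ξ
  have hf : StrictMono f := fun x y hxy => by
    have := mul_le_mul_of_nonneg_left hxy.le (by positivity : (0 : ℝ) ≤ 2 * m)
    have := v_strictMono h1 hp hxy
    have := v_strictMono hq h3 hxy
    have := v_strictMono h4 hp' hxy
    have := v_strictMono hq' h6 hxy
    simp only [f]
    linarith
  have hf0 : f 0 = 0 := by simp [f, v_zero]
  have hfπ : f Real.pi = 2 * Real.pi * (m + 2) := by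
    simp only [f, v_pi h1 hp, v_pi hq h3, v_pi h4 hp', v_pi hq' h6]
    ring
  have hfξ : ∀ k, f (ξhat k) = 2 * Real.pi * (((k : ℕ) : ℝ) + 1) := hξ
  have hmem : ∀ k, ξhat k ∈ Set.Icc 0 Real.pi := fun k => by
    have hk : ((k : ℕ) : ℝ) ≤ m := by exact_mod_cast Nat.lt_succ_iff.mp k.2
    constructor
    · rw [← hf.le_iff_le, hf0, hfξ]
      positivity
    · rw [← hf.le_iff_le, hfπ, hfξ]
      have := Real.pi_pos
      gcongr
      linarith
  have hinj : Function.Injective fun k => Real.cos (ξhat k) := fun j k hjk => by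
    have h := hfξ j
    rw [Real.injOn_cos (hmem j) (hmem k) hjk, hfξ k] at h
    have h' := mul_left_cancel₀ Real.two_pi_pos.ne' h
    exact Fin.ext (by exact_mod_cast (add_right_cancel h').symm)
  have hdet := det_eval_ne_zero _ hinj (fun l : Fin (m + 1) => bsPoly am bm ((l : ℕ) : ℤ))
    (fun l => bsPoly_natDegree_le am bm l) (fun l => bsPoly_coeff_self_ne_zero bm ha l)
  have hli : LinearIndependent ℂ
      (fun lh : Fin (m+1) => fun l : Fin (m+1) =>
        (bs am bm ((l : ℕ) : ℤ) (ξhat lh) : ℂ)) := by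
    -- The determinant commutes with the embedding of `ℝ` into `ℂ`.
    have hdetC := (map_ne_zero Complex.ofRealHom).mpr hdet
    rw [RingHom.map_det] at hdetC
    convert! Matrix.linearIndependent_rows_of_det_ne_zero hdetC using 3
    simp [bs_eq_eval]
  exact ⟨hli, hli.span_eq_top_of_card_eq_finrank (by simp)⟩
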